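/- (Construction 3) Let F_q be a finite field, r ≥ 4, l ≥ 1, and n = l(r+1). Let α_{i,j} ∈ F_q for i ∈ {1,…,l}, j ∈ {1,…,r+1}, with α_{i,j_1} ≠ α_{i,j_2} whenever j_1 ≠ j_2, and with α_{i_1,j_1} + α_{i_1,j_2} ≠ α_{i_2,h_1} + α_{i_2,h_2} whenever i_1 ≠ i_2, j_1 ≠ j_2 and h_1 ≠ h_2. Let H be the (l+3)×n matrix over F_q whose columns are indexed by pairs (i,j), such that for i' ∈ {1,…,l} the entry of row i' in column (i,j) equals 1 if i = i' and 0 otherwise, and the entries of rows l+1, l+2, l+3 in column (i,j) equal α_{i,j}, α_{i,j}^2, α_{i,j}^3 respectively. Then the linear code C = {x ∈ F_q^n : Hx = 0} has dimension n − l − 3, every coordinate of C has locality r, and the minimum distance of C equals 5, which equals the Singleton-like bound n − k − ⌈k/r⌉ + 2 for k = n − l − 3. -/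

import Mathlib

/-- Coordinate `i` of the linear code `C` has locality `r`. -/
def HasLocality {F ι : Type*} [Field F] [Fintype ι]
    (C : Submodule F (ι → F)) (i : ι) (r : ℕ) : Prop :=
  ∃ R : Finset ι, i ∉ R ∧ R.card ≤ r ∧
    ∀ c ∈ C, ∀ c' ∈ C, (∀ j ∈ R, c j = c' j) → c i = c' i

/-- The minimum distance of a linear code: the least Hamming weight of a nonzero codeword. -/
noncomputable def minDist {F ι : Type*} [Field F] [Fintype ι] [DecidableEq F]
    (C : Submodule F (ι → F)) : ℕ :=
  sInf {w | ∃ c ∈ C, c ≠ 0 ∧ hammingNorm c = w}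

/-!
In a codeword every block sums to zero, and a word supported on a single block is a codeword
exactly when that block is annihilated by the Vandermonde rows `1, α, α², α³` of the block. Four
Vandermonde columns are independent while five are dependent, so the lightest codewords on one block
have weight `5`. The rows of `H` are independent because a cubic polynomial cannot vanish at the
`r + 1 > 3` distinct points of a block.

A nonzero block has weight at least `2`, so a codeword of weight at most `4` meeting two blocks is
`a (e_j - e_{j'})` on one of them and `b (e_h - e_{h'})` on the other. Call `∑ α_j ^ t c_j` the
`t`-th moment of a block. On such a block the second moment is the first moment times
`α_j + α_{j'}`. The first moments of the two blocks are nonzero and cancel, and so do the second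
moments, so the pair sums agree, contrary to hypothesis.
-/

open Finset Function Matrix

section GeneralCodes

variable {F ι : Type*} [Field F] [Fintype ι]

theorem hasLocality_of_dotProduct_eq_zero [DecidableEq F] {C : Submodule F (ι → F)} {h : ι → F}
    {i : ι} {r : ℕ} (hi : h i ≠ 0) (hr : hammingNorm h ≤ r + 1) (hC : ∀ c ∈ C, h ⬝ᵥ c = 0) :
    HasLocality C i r := by
  classical
  refine ⟨({j | h j ≠ 0} : Finset ι).erase i, notMem_erase _ _, ?_, fun c hc c' hc' hcc' => ?_⟩
  · rw [card_erase_of_mem (by simpa using hi)]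
    exact Nat.sub_le_of_le_add hr
  · have hdot : h ⬝ᵥ (c - c') = h i * (c i - c' i) := by
      refine Fintype.sum_eq_single i fun j hj => ?_
      by_cases hhj : h j = 0
      · simp [hhj]
      · simp [hcc' j (by simp [hj, hhj])]
    rw [hC _ (C.sub_mem hc hc')] at hdot
    exact sub_eq_zero.1 ((mul_eq_zero.1 hdot.symm).resolve_left hi)

theorem minDist_eq [DecidableEq F] {C : Submodule F (ι → F)} {d : ℕ}
    (hle : ∃ c ∈ C, c ≠ 0 ∧ hammingNorm c ≤ d) (hge : ∀ c ∈ C, c ≠ 0 → d ≤ hammingNorm c) :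
    minDist C = d := by
  obtain ⟨c, hc, hc0, hcd⟩ := hle
  refine IsLeast.csInf_eq ⟨⟨c, hc, hc0, hcd.antisymm (hge c hc hc0)⟩, ?_⟩
  rintro _ ⟨c', hc', hc'0, rfl⟩
  exact hge c' hc' hc'0

theorem exists_mulVec_eq_zero_hammingNorm_le [DecidableEq F] {τ : Type*} [Fintype τ]
    (M : Matrix τ ι F) (h : Fintype.card τ < Fintype.card ι) :
    ∃ v, v ≠ 0 ∧ M *ᵥ v = 0 ∧ hammingNorm v ≤ Fintype.card τ + 1 := by
  classical
  obtain ⟨e⟩ : Nonempty (Fin (Fintype.card τ + 1) ↪ ι) :=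
    Embedding.nonempty_of_card_le (by simpa using h)
  have hker : LinearMap.ker (M.submatrix id e).mulVecLin ≠ ⊥ :=
    LinearMap.ker_ne_bot_of_finrank_lt (by simp)
  obtain ⟨w, hw, hw0⟩ := (Submodule.ne_bot_iff _).1 hker
  have hext : ∀ j ∉ Set.range e, extend e w 0 j = 0 := fun j hj =>
    extend_apply' _ _ _ (by simpa using hj)
  refine ⟨extend e w 0, fun h0 => hw0 ?_, ?_, ?_⟩
  · ext k
    rw [← e.injective.extend_apply w 0 k, h0]
    rfl
  · ext t
    refine Eq.trans ?_ (congrFun hw t)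
    refine (Fintype.sum_of_injective e e.injective _ _ (fun j hj => ?_) fun k => ?_).symm
    · rw [hext j hj, mul_zero]
    · rw [e.injective.extend_apply]
      rfl
  · have hsupp : ({j | extend e w 0 j ≠ 0} : Finset ι) ⊆ univ.map e := by
      intro j hj
      by_contra hne
      exact (mem_filter.1 hj).2 (hext j (by simpa using hne))
    exact (card_le_card hsupp).trans_eq (by simp)

end GeneralCodes

section Blocks

variable {ι κ β : Type*} [Zero β]

theorem uncurry_single_curry [DecidableEq ι] {i : ι} {c : ι × κ → β}
    (h : ∀ k ≠ i, curry c k = 0) : uncurry (Pi.single i (curry c i)) = c := by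
  conv_rhs => rw [← uncurry_curry c]
  congr 1
  ext k : 1
  obtain rfl | hk := eq_or_ne k i
  · exact Pi.single_eq_same _ _
  · rw [Pi.single_eq_of_ne hk, h k hk]

variable [Fintype ι] [Fintype κ] [DecidableEq β]

theorem hammingNorm_eq_sum_curry (c : ι × κ → β) :
    hammingNorm c = ∑ i, hammingNorm (curry c i) := by
  simp only [hammingNorm, card_filter]
  exact Fintype.sum_prod_type _

theorem hammingNorm_uncurry_single [DecidableEq ι] (i : ι) (v : κ → β) :
    hammingNorm (uncurry (Pi.single i v)) = hammingNorm v := by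
  rw [hammingNorm_eq_sum_curry, Fintype.sum_eq_single i fun k hk => by simp [hk]]
  simp

theorem hammingNorm_curry_add_hammingNorm_curry_le {i i' : ι} (hii' : i ≠ i') (c : ι × κ → β) :
    hammingNorm (curry c i) + hammingNorm (curry c i') ≤ hammingNorm c := by
  classical
  rw [hammingNorm_eq_sum_curry c, ← sum_pair (f := fun k => hammingNorm (curry c k)) hii']
  exact sum_le_univ_sum_of_nonneg fun _ => Nat.zero_le _

theorem curry_eq_zero_of_hammingNorm_le {i i' : ι} (hii' : i ≠ i') {c : ι × κ → β}
    (hle : hammingNorm c ≤ hammingNorm (curry c i) + hammingNorm (curry c i'))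
    {k : ι} (hk : k ≠ i) (hk' : k ≠ i') : curry c k = 0 := by
  classical
  have hsub : ∑ a ∈ {k, i, i'}, hammingNorm (curry c a) ≤ hammingNorm c := by
    rw [hammingNorm_eq_sum_curry c]
    exact sum_le_univ_sum_of_nonneg fun _ => Nat.zero_le _
  rw [sum_insert (by simp [hk, hk']), sum_pair hii'] at hsub
  exact hammingNorm_eq_zero.1 (by lia)

end Blocks

section Moments

variable {R κ : Type*} [CommRing R] [DecidableEq R] [Fintype κ]

theorem lt_hammingNorm_of_sum_pow_mul_eq_zero [IsDomain R] {x : κ → R} (hx : Injective x)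
    {v : κ → R} (hv : v ≠ 0) {m : ℕ} (hm : ∀ t < m, ∑ j, x j ^ t * v j = 0) :
    m < hammingNorm v := by
  classical
  by_contra! hle
  let S : Finset κ := {j | v j ≠ 0}
  let e : Fin #S ≃ S := S.equivFin.symm
  have hvS : (fun k => v (e k)) = 0 := by
    refine eq_zero_of_forall_pow_sum_mul_pow_eq_zero
      (hx.comp (Subtype.val_injective.comp e.injective)) fun t => ?_
    calc ∑ k, v (e k) * x (e k) ^ (t : ℕ)
        = ∑ s : S, v s * x s ^ (t : ℕ) := e.sum_comp fun s : S => v s * x s ^ (t : ℕ)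
      _ = ∑ j ∈ S, v j * x j ^ (t : ℕ) := sum_coe_sort S fun j => v j * x j ^ (t : ℕ)
      _ = ∑ j, v j * x j ^ (t : ℕ) :=
        sum_filter_of_ne fun j _ hj => left_ne_zero_of_mul hj
      _ = 0 := by simpa only [mul_comm] using hm t (t.isLt.trans_le hle)
  obtain ⟨j, hj⟩ := ne_iff.1 hv
  have hjS : j ∈ S := by simpa [S] using hj
  exact hj (by simpa using congrFun hvS (e.symm ⟨j, hjS⟩))

theorem sum_mul_ne_zero_of_hammingNorm_le_two [IsDomain R] {x : κ → R} (hx : Injective x)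
    {v : κ → R} (hv : v ≠ 0) (hle : hammingNorm v ≤ 2) (hsum : ∑ j, v j = 0) :
    ∑ j, x j * v j ≠ 0 := fun hzero =>
  hle.not_gt <| lt_hammingNorm_of_sum_pow_mul_eq_zero hx hv fun t ht => by
    interval_cases t
    · simpa using hsum
    · simpa using hzero

theorem exists_sum_sq_mul_eq_add_mul_sum_mul (x : κ → R) {v : κ → R} (hv : hammingNorm v = 2)
    (hsum : ∑ j, v j = 0) :
    ∃ j j', j ≠ j' ∧ ∑ k, x k ^ 2 * v k = (x j + x j') * ∑ k, x k * v k := by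
  classical
  obtain ⟨j, j', hjj', hsupp⟩ := card_eq_two.1 hv
  have hzero : ∀ k, k ≠ j ∧ k ≠ j' → v k = 0 := fun k hk => by
    by_contra hvk
    have : k ∈ ({j, j'} : Finset κ) := hsupp ▸ by simpa using hvk
    simp [hk] at this
  have hpair (y : κ → R) : ∑ k, y k * v k = y j * v j + y j' * v j' :=
    Fintype.sum_eq_add j j' hjj' fun k hk => by rw [hzero k hk, mul_zero]
  refine ⟨j, j', hjj', ?_⟩
  rw [Fintype.sum_eq_add j j' hjj' hzero] at hsum
  rw [hpair, hpair]
  linear_combination -x j * x j' * hsum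

end Moments

section Code

variable {F ι κ : Type*} [Field F] [DecidableEq ι]

/-- The parity-check matrix of Construction 3 with `m` power rows instead of `3`, over arbitrary
index types `ι` of blocks and `κ` of positions in a block: one row of ones for each block, and
the rows `α, α², …, α^m`, where the index `t : Fin m` stands for the exponent `t + 1`. -/
def parityCheck (m : ℕ) (α : ι → κ → F) : Matrix (ι ⊕ Fin m) (ι × κ) F :=
  fromRows (of fun i p => if p.1 = i then 1 else 0) (of fun t p => α p.1 p.2 ^ (t + 1 : ℕ))

variable {m : ℕ} {α : ι → κ → F}

theorem eq_parityCheck_iff {H : Matrix (ι ⊕ Fin m) (ι × κ) F} :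
    H = parityCheck m α ↔ (∀ i p, H (.inl i) p = if p.1 = i then 1 else 0) ∧
      ∀ t p, H (.inr t) p = α p.1 p.2 ^ (t + 1 : ℕ) := by
  simp only [← Matrix.ext_iff, Sum.forall, parityCheck, fromRows_apply_inl, fromRows_apply_inr,
    of_apply]

theorem linearIndependent_row_parityCheck [Finite ι] [Nonempty ι] [Fintype κ]
    (hα : ∀ i, Injective (α i)) (hm : m < Fintype.card κ) :
    LinearIndependent F (parityCheck m α).row := by
  cases nonempty_fintype ι
  rw [Fintype.linearIndependent_iff]
  intro g hg
  obtain ⟨e⟩ : Nonempty (Fin (m + 1) ↪ κ) := Embedding.nonempty_of_card_le (by simpa using hm)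
  have hpoly (i : ι) (j : κ) : g (.inl i) + ∑ t : Fin m, α i j ^ (t + 1 : ℕ) * g (.inr t) = 0 := by
    simpa [parityCheck, mul_comm] using congrFun hg (i, j)
  have hcoeff (i : ι) : (Fin.cons (g (.inl i)) (g ∘ .inr) : Fin (m + 1) → F) = 0 :=
    eq_zero_of_forall_index_sum_pow_mul_eq_zero ((hα i).comp e.injective) fun k => by
      simpa [Fin.sum_univ_succ] using hpoly i (e k)
  rintro (i | t)
  · exact congrFun (hcoeff i) 0
  · exact congrFun (hcoeff (Classical.arbitrary ι)) t.succ

variable [Fintype ι] [Fintype κ]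

/-- The code of Construction 3 with `m` power rows, as the kernel of `parityCheck m α`. -/
def blockCode (m : ℕ) (α : ι → κ → F) : Submodule F (ι × κ → F) :=
  LinearMap.ker (parityCheck m α).mulVecLin

theorem mem_blockCode_iff {c : ι × κ → F} :
    c ∈ blockCode m α ↔ (∀ i, ∑ j, c (i, j) = 0) ∧
      ∀ t < m, ∑ i, ∑ j, α i j ^ (t + 1) * c (i, j) = 0 := by
  have hrow (i : ι) : (∑ k, ∑ j, if k = i then c (k, j) else 0) = ∑ j, c (i, j) := by
    rw [Fintype.sum_eq_single i fun k hk => by simp [hk]]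
    simp
  simp [blockCode, parityCheck, fromRows_mulVec, funext_iff, mulVec, dotProduct,
    Fintype.sum_prod_type, hrow, Fin.forall_iff]

theorem uncurry_single_mem_blockCode_iff {i : ι} {v : κ → F} :
    uncurry (Pi.single i v) ∈ blockCode m α ↔ ∀ t < m + 1, ∑ j, α i j ^ t * v j = 0 := by
  have hblock : (∀ k, ∑ j, uncurry (Pi.single i v) (k, j) = 0) ↔ ∑ j, v j = 0 := by
    refine ⟨fun h => by simpa using h i, fun h k => ?_⟩
    obtain rfl | hk := eq_or_ne k i <;> simp [*]
  have hmoment (t : ℕ) : ∑ k, ∑ j, α k j ^ t * uncurry (Pi.single i v) (k, j) =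
      ∑ j, α i j ^ t * v j := by
    rw [Fintype.sum_eq_single i fun k hk => by simp [hk]]
    simp
  simp only [mem_blockCode_iff, hblock, hmoment, Nat.forall_lt_succ_left, pow_zero, one_mul]

theorem card_add_add_finrank_blockCode [Nonempty ι] (hα : ∀ i, Injective (α i))
    (hm : m < Fintype.card κ) :
    Fintype.card ι + m + Module.finrank F (blockCode m α) = Fintype.card ι * Fintype.card κ := by
  have hrank : (parityCheck m α).rank = Fintype.card ι + m := by
    simpa using (linearIndependent_row_parityCheck hα hm).rank_matrix
  rw [← hrank, ← Fintype.card_prod, ← Module.finrank_fintype_fun_eq_card F]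
  exact LinearMap.finrank_range_add_finrank_ker _

theorem hasLocality_blockCode {r : ℕ} (hκ : Fintype.card κ ≤ r + 1) (p : ι × κ) :
    HasLocality (blockCode m α) p r := by
  classical
  refine hasLocality_of_dotProduct_eq_zero (h := uncurry (Pi.single p.1 1)) (by simp [uncurry]) ?_
    fun c hc => ?_
  · rw [hammingNorm_uncurry_single]
    exact hammingNorm_le_card_fintype.trans hκ
  · rw [← (mem_blockCode_iff.1 hc).1 p.1, dotProduct, Fintype.sum_prod_type,
      Fintype.sum_eq_single p.1 fun i hi => by simp [hi]]
    simp

variable [DecidableEq F]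

theorem exists_mem_blockCode_hammingNorm_le [Nonempty ι] (hm : m + 1 < Fintype.card κ) :
    ∃ c ∈ blockCode m α, c ≠ 0 ∧ hammingNorm c ≤ m + 2 := by
  let i := Classical.arbitrary ι
  obtain ⟨v, hv0, hv, hvm⟩ := exists_mulVec_eq_zero_hammingNorm_le
    (of fun (t : Fin (m + 1)) j => α i j ^ (t : ℕ)) (by simpa using hm)
  refine ⟨uncurry (Pi.single i v), uncurry_single_mem_blockCode_iff.2 fun t ht => ?_, ?_, ?_⟩
  · exact congrFun hv ⟨t, ht⟩
  · rwa [← hammingNorm_ne_zero_iff, hammingNorm_uncurry_single, hammingNorm_ne_zero_iff]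
  · simpa [hammingNorm_uncurry_single] using hvm

theorem four_lt_hammingNorm_of_two_blocks (hm : 2 ≤ m) {i i' : ι} (hii' : i ≠ i')
    (hα : Injective (α i)) (hα' : Injective (α i'))
    (hsum : ∀ j j' h h', j ≠ j' → h ≠ h' → α i j + α i j' ≠ α i' h + α i' h')
    {c : ι × κ → F} (hc : c ∈ blockCode m α) (hi : curry c i ≠ 0) (hi' : curry c i' ≠ 0) :
    4 < hammingNorm c := by
  by_contra! hle
  obtain ⟨hblock, hmoment⟩ := mem_blockCode_iff.1 hc
  have htwo : 2 ≤ hammingNorm (curry c i) :=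
    lt_hammingNorm_of_sum_pow_mul_eq_zero hα hi (by simpa using hblock i)
  have htwo' : 2 ≤ hammingNorm (curry c i') :=
    lt_hammingNorm_of_sum_pow_mul_eq_zero hα' hi' (by simpa using hblock i')
  have hadd := hammingNorm_curry_add_hammingNorm_curry_le hii' c
  have hrest : ∀ k, k ≠ i ∧ k ≠ i' → curry c k = 0 :=
    fun k hk => curry_eq_zero_of_hammingNorm_le hii' (by lia) hk.1 hk.2
  have hcancel (t : ℕ) (ht : t < m) :
      ∑ j, α i j ^ (t + 1) * curry c i j + ∑ j, α i' j ^ (t + 1) * curry c i' j = 0 := by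
    have hzero : ∀ k, k ≠ i ∧ k ≠ i' → ∑ j, α k j ^ (t + 1) * curry c k j = 0 :=
      fun k hk => by simp only [hrest k hk, Pi.zero_apply, mul_zero, sum_const_zero]
    exact (Fintype.sum_eq_add i i' hii' hzero).symm.trans (hmoment t ht)
  have hfirst := hcancel 0 (by lia)
  have hsecond := hcancel 1 (by lia)
  obtain ⟨j, j', hjj', hsq⟩ :=
    exists_sum_sq_mul_eq_add_mul_sum_mul (α i) (v := curry c i) (by lia) (hblock i)
  obtain ⟨h, h', hhh', hsq'⟩ :=
    exists_sum_sq_mul_eq_add_mul_sum_mul (α i') (v := curry c i') (by lia) (hblock i')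
  have hne : ∑ j, α i j * curry c i j ≠ 0 :=
    sum_mul_ne_zero_of_hammingNorm_le_two hα hi (by lia) (hblock i)
  refine hsum j j' h h' hjj' hhh' (mul_right_cancel₀ hne ?_)
  simp only [zero_add, pow_one, one_add_one_eq_two] at hfirst hsecond
  linear_combination hsecond - hsq - hsq' - (α i' h + α i' h') * hfirst

theorem five_le_hammingNorm_of_mem_blockCode (hm : 3 ≤ m) (hα : ∀ i, Injective (α i))
    (hsum : ∀ i i' j j' h h', i ≠ i' → j ≠ j' → h ≠ h' → α i j + α i j' ≠ α i' h + α i' h')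
    {c : ι × κ → F} (hc : c ∈ blockCode m α) (hc0 : c ≠ 0) : 5 ≤ hammingNorm c := by
  obtain ⟨⟨i, j⟩, hij⟩ := ne_iff.1 hc0
  have hi : curry c i ≠ 0 := ne_iff.2 ⟨j, hij⟩
  by_cases hother : ∃ i', i ≠ i' ∧ curry c i' ≠ 0
  · obtain ⟨i', hii', hi'⟩ := hother
    exact four_lt_hammingNorm_of_two_blocks (by lia) hii' (hα i) (hα i')
      (fun j j' h h' => hsum i i' j j' h h' hii') hc hi hi'
  · push Not at hother
    have hcs : uncurry (Pi.single i (curry c i)) = c :=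
      uncurry_single_curry fun k hk => hother k hk.symm
    have hlt : m + 1 < hammingNorm (curry c i) :=
      lt_hammingNorm_of_sum_pow_mul_eq_zero (hα i) hi
        (uncurry_single_mem_blockCode_iff.1 (hcs.symm ▸ hc))
    rw [← hcs, hammingNorm_uncurry_single]
    lia

end Code

section SingletonBound

theorem ceil_mul_sub_div {K : Type*} [Field K] [LinearOrder K] [IsStrictOrderedRing K]
    [FloorRing K] (l : ℤ) {a b : K} (ha : 0 ≤ a) (hab : a < b) : ⌈(l * b - a) / b⌉ = l := by
  have hb : 0 < b := ha.trans_lt hab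
  rw [Int.ceil_eq_iff, lt_div_iff₀ hb, div_le_iff₀ hb]
  constructor <;> linarith

theorem singleton_bound_eq {l m r n k : ℕ} (hl : 1 ≤ l) (hmr : m < r) (hn : n = l * (r + 1))
    (hk : k = n - l - m) : (n : ℤ) - k - ⌈(k : ℚ) / r⌉ + 2 = m + 2 := by
  have hnk : n = k + l + m := by
    have : m ≤ l * r := hmr.le.trans (Nat.le_mul_of_pos_left r hl)
    grind
  have hk' : (k : ℚ) = (l : ℤ) * r - m := by
    have : ((k + l + m : ℕ) : ℚ) = (l * (r + 1) : ℕ) := by rw [← hnk, hn]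
    push_cast at this ⊢
    linear_combination this
  rw [hk', ceil_mul_sub_div _ (Nat.cast_nonneg m) (Nat.cast_lt.2 hmr), hnk]
  push_cast
  ring

end SingletonBound

theorem stmt_16_general {F ι κ : Type*} [Field F] [DecidableEq F] [Fintype ι] [DecidableEq ι]
    [Nonempty ι] [Fintype κ] {r n k : ℕ} (hr : 4 ≤ r) (hκ : Fintype.card κ = r + 1)
    (hn : n = Fintype.card ι * (r + 1)) (hk : k = n - Fintype.card ι - 3)
    {α : ι → κ → F} (hα : ∀ i, Injective (α i))
    (hsum : ∀ i₁ i₂ j₁ j₂ h₁ h₂, i₁ ≠ i₂ → j₁ ≠ j₂ → h₁ ≠ h₂ →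
      α i₁ j₁ + α i₁ j₂ ≠ α i₂ h₁ + α i₂ h₂) :
    Module.finrank F (blockCode 3 α) = k ∧ (∀ p, HasLocality (blockCode 3 α) p r) ∧
    minDist (blockCode 3 α) = 5 ∧ (5 : ℤ) = (n : ℤ) - k - ⌈(k : ℚ) / r⌉ + 2 := by
  refine ⟨?_, hasLocality_blockCode hκ.le, ?_, ?_⟩
  · have hdim := card_add_add_finrank_blockCode hα (m := 3) (by lia)
    rw [hκ, ← hn] at hdim
    lia
  · exact minDist_eq (exists_mem_blockCode_hammingNorm_le (by lia))
      fun c => five_le_hammingNorm_of_mem_blockCode le_rfl hα hsum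
  · exact (singleton_bound_eq Fintype.card_pos (by lia) hn hk).symm

/-- Construction 3: with `r ≥ 4`, `n = l(r+1)`, distinct `α i ·` within each group, distinct
pairwise sums across groups, and the parity-check matrix with locality rows and Vandermonde
rows `α, α², α³`, the code `{x : Hx = 0}` has dimension `n - l - 3`, all symbol locality `r`,
and minimum distance `5`, which equals the Singleton-like bound `n - k - ⌈k/r⌉ + 2` for
`k = n - l - 3`. -/
theorem stmt_16 {F : Type*} [Field F] [Fintype F] [DecidableEq F]
    {l r n : ℕ} (hr : 4 ≤ r) (hl : 1 ≤ l) (hn : n = l * (r + 1))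
    (α : Fin l → Fin (r + 1) → F) (hα : ∀ i : Fin l, Function.Injective (α i))
    (hsum : ∀ (i₁ i₂ : Fin l) (j₁ j₂ h₁ h₂ : Fin (r + 1)), i₁ ≠ i₂ → j₁ ≠ j₂ → h₁ ≠ h₂ →
      α i₁ j₁ + α i₁ j₂ ≠ α i₂ h₁ + α i₂ h₂)
    (H : Matrix (Fin l ⊕ Fin 3) (Fin l × Fin (r + 1)) F)
    (hH1 : ∀ (i' : Fin l) (p : Fin l × Fin (r + 1)),
      H (Sum.inl i') p = if p.1 = i' then 1 else 0)
    (hH2 : ∀ p : Fin l × Fin (r + 1), H (Sum.inr 0) p = α p.1 p.2)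
    (hH3 : ∀ p : Fin l × Fin (r + 1), H (Sum.inr 1) p = α p.1 p.2 ^ 2)
    (hH4 : ∀ p : Fin l × Fin (r + 1), H (Sum.inr 2) p = α p.1 p.2 ^ 3) :
    Module.finrank F (LinearMap.ker H.mulVecLin) = n - l - 3 ∧
    (∀ p : Fin l × Fin (r + 1), HasLocality (LinearMap.ker H.mulVecLin) p r) ∧
    minDist (LinearMap.ker H.mulVecLin) = 5 ∧
    (5 : ℤ) = (n : ℤ) - (n - l - 3 : ℕ) - ⌈((n - l - 3 : ℕ) : ℚ) / r⌉ + 2 := by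
  obtain rfl : H = parityCheck 3 α :=
    eq_parityCheck_iff.2 ⟨hH1, by simp [Fin.forall_fin_succ, hH2, hH3, hH4]⟩
  have : Nonempty (Fin l) := ⟨0, hl⟩
  exact stmt_16_general hr (by simp) (by simpa using hn) (by simp) hα hsum
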